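/- arXiv:2311.15409 — 2 statements merged into one kernel-verified Lean document; each statement's English description precedes it below -/
import Mathlib

section
/- For any algebraically closed field F of characteristic 2, SL₂(F) is a commutative transitive (CT) group: for every non-identity g ∈ SL₂(F), the centralizer of g in SL₂(F) is abelian. -/
open Matrix

/-- Two vectors parallel to a common nonzero vector are parallel to each other. -/
lemma parallel_aux {F : Type*} [Field F] {x y z a b c d e f : F}
    (h : ¬ (x = 0 ∧ y = 0 ∧ z = 0))
    (h1 : x * b = y * a) (h2 : x * c = z * a) (h3 : y * c = z * b)
    (k1 : x * e = y * d) (k2 : x * f = z * d) (k3 : y * f = z * e) :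
    a * e = b * d ∧ a * f = c * d ∧ b * f = c * e := by
  by_cases hx : x = 0
  · by_cases hy : y = 0
    · have hz : z ≠ 0 := fun hz => h ⟨hx, hy, hz⟩
      refine ⟨?_, ?_, ?_⟩ <;> grind
    · refine ⟨?_, ?_, ?_⟩ <;> apply mul_left_cancel₀ hy <;> grind
  · refine ⟨?_, ?_, ?_⟩ <;> apply mul_left_cancel₀ hx <;> grind

/-- For any algebraically closed field `F` of characteristic 2, `SL₂(F)` is a
commutative transitive (CT) group: the centralizer of every non-identity element
is abelian. -/
theorem sl2_char_two_commutative_transitive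
    (F : Type*) [Field F] [IsAlgClosed F] [CharP F 2]
    (g : SpecialLinearGroup (Fin 2) F) (hg : g ≠ 1) :
    ∀ a ∈ Subgroup.centralizer {g}, ∀ b ∈ Subgroup.centralizer {g}, a * b = b * a := by
  have key : ∀ a ∈ Subgroup.centralizer {g},
      g.1 0 1 * a.1 1 0 = g.1 1 0 * a.1 0 1 ∧
      g.1 0 1 * (a.1 0 0 - a.1 1 1) = (g.1 0 0 - g.1 1 1) * a.1 0 1 ∧
      g.1 1 0 * (a.1 0 0 - a.1 1 1) = (g.1 0 0 - g.1 1 1) * a.1 1 0 := by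
    intro a ha
    have h : g * a = a * g := Subgroup.mem_centralizer_iff.1 ha g rfl
    have h' : g.1 * a.1 = a.1 * g.1 := congrArg Subtype.val h
    have h00 := congrFun (congrFun h' 0) 0
    have h01 := congrFun (congrFun h' 0) 1
    have h10 := congrFun (congrFun h' 1) 0
    simp only [Matrix.mul_apply, Fin.sum_univ_two] at h00 h01 h10
    refine ⟨?_, ?_, ?_⟩
    · linear_combination h00
    · linear_combination -h01
    · linear_combination h10
  have hne : ¬ (g.1 0 1 = 0 ∧ g.1 1 0 = 0 ∧ g.1 0 0 - g.1 1 1 = 0) := by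
    rintro ⟨h1, h2, h3⟩
    apply hg
    have hd := g.2
    rw [Matrix.det_fin_two] at hd
    have h2F : (2 : F) = 0 := CharTwo.two_eq_zero
    have hp : g.1 0 0 = 1 := by
      have hsq : (g.1 0 0 - 1) ^ 2 = 0 := by
        linear_combination hd + g.1 0 0 * h3 + g.1 1 0 * h1 + (1 - g.1 0 0) * h2F
      exact sub_eq_zero.1 (pow_eq_zero_iff (two_ne_zero)|>.1 hsq)
    have hs : g.1 1 1 = 1 := by rw [← sub_eq_zero.1 h3, hp]
    apply Subtype.ext
    ext i j
    fin_cases i <;> fin_cases j <;> simp [h1, h2, hp, hs]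
  intro a ha b hb
  obtain ⟨a1, a2, a3⟩ := key a ha
  obtain ⟨b1, b2, b3⟩ := key b hb
  obtain ⟨c1, c2, c3⟩ := parallel_aux hne a1 a2 a3 b1 b2 b3
  apply Subtype.ext
  change a.1 * b.1 = b.1 * a.1
  ext i j
  fin_cases i <;> fin_cases j <;>
    simp only [Matrix.mul_apply, Fin.sum_univ_two, Fin.zero_eta, Fin.mk_one]
  · linear_combination c1
  · linear_combination -c2
  · linear_combination c3
  · linear_combination -c1
end

section
/- A group G is uniformly inner amenable if and only if every group H elementarily equivalent to G is inner amenable. Moreover, these are equivalent to every ultrapower of G being inner amenable. -/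
open FirstOrder

/-- The first-order language of groups: one constant (identity), one unary
function (inverse), one binary function (multiplication), no relations. -/
def grpLang : FirstOrder.Language :=
  ⟨fun n => match n with
    | 0 => Unit
    | 1 => Unit
    | 2 => Unit
    | _ => Empty,
   fun _ => Empty⟩

/-- Every group is a structure for the language of groups in the natural way. -/
instance grpStructure (G : Type*) [Group G] : grpLang.Structure G where
  funMap {n} f v :=
    match n, f with
    | 0, _ => 1
    | 1, _ => (v 0)⁻¹
    | 2, _ => v 0 * v 1
  RelMap {n} r := Empty.elim r

/-- `T` is an `(S, ε)`-conjugation-Følner set: `|gTg⁻¹ △ T| < ε|T|` for all `g ∈ S`. -/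
def IsCFolner {G : Type*} [Group G] (S : Finset G) (ε : ℝ) (T : Finset G) : Prop :=
  letI := Classical.decEq G
  ∀ g ∈ S, (((symmDiff (T.image fun x => g * x * g⁻¹) T).card : ℝ)) < ε * T.card

/-- `G` is inner amenable (Følner formulation): for every finite `S ⊆ G`, every
`ε > 0` and every `n`, there is a nonempty finite `(S, ε)`-conjugation-Følner
set of cardinality at least `n`. -/
def FolnerInnerAmenable (G : Type*) [Group G] : Prop :=
  ∀ (S : Finset G) (ε : ℝ), 0 < ε → ∀ n : ℕ,
    ∃ T : Finset G, T.Nonempty ∧ n ≤ T.card ∧ IsCFolner S ε T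

/-- `G` is uniformly inner amenable: there is `f : ℕ → ℕ` such that for every
`n` and every finite `S ⊆ G` with `|S| ≤ n` there is a finite `T ⊆ G` with
`n ≤ |T| ≤ f n` which is an `(S, 1/n)`-conjugation-Følner set. -/
def UniformlyInnerAmenable (G : Type*) [Group G] : Prop :=
  ∃ f : ℕ → ℕ, ∀ (n : ℕ) (S : Finset G), S.card ≤ n →
    ∃ T : Finset G, n ≤ T.card ∧ T.card ≤ f n ∧ IsCFolner S (1 / (n : ℝ)) T

namespace UIA

open FirstOrder FirstOrder.Language Filter

theorem card_symmDiff_image {G : Type*} [DecidableEq G] (T : Finset G) (φ : G → G)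
    (hφ : Function.Injective φ) :
    (symmDiff (T.image φ) T).card + 2 * (T.filter fun x => φ x ∈ T).card = 2 * T.card := by
  have h1 : (T.filter fun x => φ x ∈ T).card = (T.image φ ∩ T).card := by
    rw [← Finset.card_image_of_injective _ hφ]
    congr 1
    ext y
    simp only [Finset.mem_image, Finset.mem_filter, Finset.mem_inter]
    constructor
    · rintro ⟨a, ⟨h1, h2⟩, rfl⟩
      exact ⟨⟨a, h1, rfl⟩, h2⟩
    · rintro ⟨⟨a, h1, rfl⟩, h2⟩
      exact ⟨a, ⟨h1, h2⟩, rfl⟩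
  have h2 : (symmDiff (T.image φ) T).card = (T.image φ \ T).card + (T \ T.image φ).card := by
    rw [symmDiff_def, Finset.sup_eq_union, Finset.card_union_of_disjoint]
    exact disjoint_sdiff_sdiff
  have h3 := Finset.card_sdiff_add_card_inter (T.image φ) T
  have h4 := Finset.card_sdiff_add_card_inter T (T.image φ)
  rw [Finset.inter_comm] at h4
  have h5 := Finset.card_image_of_injective T hφ
  omega

/-- Combinatorial form of the existence of an `m`-element Følner set for the tuple `x`. -/
def Good {G : Type*} [Group G] (n m : ℕ) (x : Fin n → G) : Prop :=
  ∃ t : Fin m → G, (∀ i j, i ≠ j → t i ≠ t j) ∧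
    ∃ p : {p : (Fin n → Fin m → Fin m) × (Fin n → Finset (Fin m)) //
        ∀ i, n * (2 * m) < m + n * (2 * (p.2 i).card)},
      ∀ i, ∀ j : {j // j ∈ p.1.2 i}, x i * t j = t (p.1.1 i j) * x i

theorem conj_injective {G : Type*} [Group G] (g : G) :
    Function.Injective fun x => g * x * g⁻¹ := by
  intro a b h
  simpa using h

theorem good_of_folner {G : Type*} [Group G] (n : ℕ) (hn : 0 < n) (x : Fin n → G)
    (S T : Finset G) (hS : ∀ i, x i ∈ S) (h : IsCFolner S (1 / (n : ℝ)) T) :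
    Good n T.card x := by
  classical
  let e := T.equivFin
  refine ⟨fun j => (e.symm j : G), ?_, ⟨⟨fun i j =>
    if h : x i * (e.symm j : G) * (x i)⁻¹ ∈ T then e ⟨_, h⟩ else j,
    fun i => Finset.univ.filter fun j => x i * (e.symm j : G) * (x i)⁻¹ ∈ T⟩, ?_⟩, ?_⟩
  · intro i j hij h
    exact hij (e.symm.injective (Subtype.ext h))
  · intro i
    have h1 := h (x i) (hS i)
    have h2 := card_symmDiff_image T _ (conj_injective (x i))
    have h3 : (T.filter fun y => x i * y * (x i)⁻¹ ∈ T).card =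
        (Finset.univ.filter fun j => x i * (e.symm j : G) * (x i)⁻¹ ∈ T).card := by
      symm
      refine Finset.card_bij (fun j _ => (e.symm j : G)) ?_ ?_ ?_
      · intro j hj
        simpa using hj
      · intro a _ b _ hab
        exact e.symm.injective (Subtype.ext hab)
      · intro b hb
        rw [Finset.mem_filter] at hb
        exact ⟨e ⟨b, hb.1⟩, by simpa using hb.2, by simp⟩
    dsimp only
    rw [← h3]
    have hn' : (0 : ℝ) < n := by exact_mod_cast hn
    have h4 : (n : ℝ) * ((symmDiff (T.image fun y => x i * y * (x i)⁻¹) T).card : ℝ) < T.card := by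
      have := mul_lt_mul_of_pos_left h1 hn'
      rw [← mul_assoc, mul_one_div_cancel hn'.ne', one_mul] at this
      convert this
    have h5 : n * (symmDiff (T.image fun y => x i * y * (x i)⁻¹) T).card < T.card := by
      exact_mod_cast h4
    rw [← h2, mul_add]
    omega
  · rintro i ⟨j, hj⟩
    have hj' : x i * (e.symm j : G) * (x i)⁻¹ ∈ T := by simpa using hj
    simp only [dif_pos hj']
    simp

theorem folner_of_good {G : Type*} [Group G] (n m : ℕ) (hn : 0 < n) (x : Fin n → G)
    (S : Finset G) (hS : ∀ g ∈ S, ∃ i, x i = g) (h : Good n m x) :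
    ∃ T : Finset G, T.card = m ∧ IsCFolner S (1 / (n : ℝ)) T := by
  classical
  obtain ⟨t, ht, ⟨⟨σ, A⟩, hA⟩, hx⟩ := h
  have hti : Function.Injective t := by
    intro a b hab
    by_contra hne
    exact ht a b hne hab
  have hc : (Finset.univ.image t).card = m := by
    rw [Finset.card_image_of_injective _ hti]; simp
  refine ⟨Finset.univ.image t, hc, ?_⟩
  intro g hg
  obtain ⟨i, rfl⟩ := hS g hg
  have h2 := card_symmDiff_image (Finset.univ.image t) _ (conj_injective (x i))
  have h3 : (A i).card ≤
      ((Finset.univ.image t).filter fun y => x i * y * (x i)⁻¹ ∈ Finset.univ.image t).card := by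
    rw [← Finset.card_image_of_injective (A i) hti]
    apply Finset.card_le_card
    intro y hy
    obtain ⟨j, hj, rfl⟩ := Finset.mem_image.1 hy
    have := hx i ⟨j, hj⟩
    simp only at this
    simp [this]
  have hn' : (0 : ℝ) < n := by exact_mod_cast hn
  have h4 := hA i
  simp only at h4
  have h5 : n * (symmDiff ((Finset.univ.image t).image fun y => x i * y * (x i)⁻¹)
      (Finset.univ.image t)).card < m := by
    rw [hc] at h2
    have h6 := Nat.mul_le_mul_left n h3
    rw [← h2, mul_add] at h4
    have h7 := Nat.mul_le_mul_left 2 h6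
    have e1 := Nat.mul_left_comm 2 n (A i).card
    have e2 := Nat.mul_left_comm 2 n ((Finset.univ.image t).filter
      fun y => x i * y * (x i)⁻¹ ∈ Finset.univ.image t).card
    omega
  have h6 : (n : ℝ) * ((symmDiff ((Finset.univ.image t).image fun y => x i * y * (x i)⁻¹)
      (Finset.univ.image t)).card : ℝ) < m := by exact_mod_cast h5
  rw [hc, one_div, inv_mul_eq_div, lt_div_iff₀ hn', mul_comm]
  convert h6

theorem exists_tuple {G : Type*} [Group G] (n : ℕ) (S : Finset G) (h : S.card ≤ n) :
    ∃ x : Fin n → G, ∀ g ∈ S, ∃ i, x i = g := by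
  classical
  refine ⟨fun i => if h : (i : ℕ) < S.card then (S.equivFin.symm ⟨i, h⟩ : G) else 1, ?_⟩
  intro g hg
  refine ⟨⟨S.equivFin ⟨g, hg⟩, lt_of_lt_of_le (Fin.is_lt _) h⟩, ?_⟩
  simp

theorem uia_iff {G : Type*} [Group G] : UniformlyInnerAmenable G ↔
    ∀ n, 0 < n → ∃ k, ∀ x : Fin n → G, ∃ m, (n ≤ m ∧ m ≤ k) ∧ Good n m x := by
  classical
  constructor
  · rintro ⟨f, hf⟩ n hn
    refine ⟨f n, fun x => ?_⟩
    obtain ⟨T, h1, h2, h3⟩ := hf n (Finset.univ.image x) (Finset.card_image_le.trans (by simp))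
    exact ⟨T.card, ⟨h1, h2⟩, good_of_folner n hn x _ T (fun i => by simp) h3⟩
  · intro h
    choose f hf using h
    refine ⟨fun n => if hn : 0 < n then f n hn else 0, ?_⟩
    intro n S hS
    rcases Nat.eq_zero_or_pos n with rfl | hn
    · refine ⟨∅, by simp, by simp, ?_⟩
      have : S = ∅ := by simpa using hS
      subst this
      intro g hg
      simp at hg
    · obtain ⟨x, hx⟩ := exists_tuple n S hS
      obtain ⟨m, ⟨h1, h2⟩, h3⟩ := hf n hn x
      obtain ⟨T, rfl, hT⟩ := folner_of_good n m hn x S hx h3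
      exact ⟨T, h1, by simpa [hn] using h2, hT⟩

theorem ia_iff {G : Type*} [Group G] : FolnerInnerAmenable G ↔
    ∀ n, 0 < n → ∀ x : Fin n → G, ∃ m, n ≤ m ∧ Good n m x := by
  classical
  constructor
  · intro h n hn x
    obtain ⟨T, _, h1, h2⟩ := h (Finset.univ.image x) (1 / (n : ℝ)) (by positivity) n
    exact ⟨T.card, h1, good_of_folner n hn x _ T (fun i => by simp) h2⟩
  · intro h S ε hε n
    obtain ⟨k, hk⟩ := exists_nat_gt (1 / ε)
    let N := n + S.card + k + 1
    obtain ⟨x, hx⟩ := exists_tuple N S (by omega)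
    obtain ⟨m, h1, h2⟩ := h N (by omega) x
    obtain ⟨T, rfl, hT⟩ := folner_of_good N m (by omega) x S hx h2
    refine ⟨T, Finset.card_pos.1 (by omega), by omega, ?_⟩
    intro g hg
    refine (hT g hg).trans_le ?_
    apply mul_le_mul_of_nonneg_right _ (Nat.cast_nonneg _)
    rw [one_div_le (by positivity) hε]
    refine hk.le.trans ?_
    exact_mod_cast (by omega : k ≤ N)

theorem uia_ia {G : Type*} [Group G] (h : UniformlyInnerAmenable G) : FolnerInnerAmenable G := by
  rw [uia_iff] at h
  rw [ia_iff]
  intro n hn x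
  obtain ⟨k, hk⟩ := h n hn
  obtain ⟨m, h1, h2⟩ := hk x
  exact ⟨m, h1.1, h2⟩

/-- The multiplication symbol. -/
def mulF : grpLang.Functions 2 := ()

/-- Product of two terms. -/
def mulT {α : Type*} (a b : grpLang.Term α) : grpLang.Term α := Functions.apply₂ mulF a b

theorem realize_mulT {G : Type*} [Group G] {α : Type*} (a b : grpLang.Term α) (v : α → G) :
    (mulT a b).realize v = a.realize v * b.realize v := by
  rw [mulT, Term.realize_functions_apply₂]
  rfl

/-- The formula expressing `Good`. -/
noncomputable def goodF (n m : ℕ) : grpLang.Formula (Fin n) :=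
  Formula.iExs (Fin m) ((Formula.iInf fun q : {q : Fin m × Fin m // q.1 ≠ q.2} =>
      (Term.equal (Term.var (Sum.inr q.1.1)) (Term.var (Sum.inr q.1.2))).not) ⊓
    Formula.iSup fun p : {p : (Fin n → Fin m → Fin m) × (Fin n → Finset (Fin m)) //
        ∀ i, n * (2 * m) < m + n * (2 * (p.2 i).card)} =>
      Formula.iInf fun i : Fin n => Formula.iInf fun j : {j // j ∈ p.1.2 i} =>
        Term.equal (mulT (Term.var (Sum.inl i)) (Term.var (Sum.inr j.1)))
          (mulT (Term.var (Sum.inr (p.1.1 i j))) (Term.var (Sum.inl i))))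

theorem realize_goodF {G : Type*} [Group G] (n m : ℕ) (x : Fin n → G) :
    (goodF n m).Realize x ↔ Good n m x := by
  simp only [goodF, Good, Formula.realize_iExs, Formula.realize_inf, Formula.realize_iInf,
    Formula.realize_iSup, Formula.realize_not, Formula.realize_equal, realize_mulT,
    Term.realize_var, Sum.elim_inl, Sum.elim_inr, Subtype.forall, Prod.forall]

/-- The sentence expressing uniformity. -/
noncomputable def uniS (n k : ℕ) : grpLang.Sentence :=
  Formula.iAlls (Fin n) ((Formula.iSup fun m : {m : Fin (k + 1) // n ≤ m} =>
    goodF n m.1).relabel Sum.inr)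

theorem realize_uniS {G : Type*} [Group G] (n k : ℕ) :
    G ⊨ uniS n k ↔ ∀ x : Fin n → G, ∃ m, (n ≤ m ∧ m ≤ k) ∧ Good n m x := by
  simp only [uniS, Sentence.Realize, Formula.realize_iAlls, Formula.realize_relabel,
    Formula.realize_iSup]
  refine forall_congr' fun x => ?_
  have : ((fun a => Sum.elim (default : Empty → G) x a) ∘ Sum.inr) = x := rfl
  rw [this]
  constructor
  · rintro ⟨⟨m, hm⟩, h⟩
    exact ⟨m, ⟨hm, by omega⟩, (realize_goodF _ _ _).1 h⟩
  · rintro ⟨m, ⟨hm, hk⟩, h⟩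
    exact ⟨⟨⟨m, by omega⟩, hm⟩, (realize_goodF _ _ _).2 h⟩

theorem uia_of_equiv {G H : Type*} [Group G] [Group H] (e : G ≅[grpLang] H)
    (h : UniformlyInnerAmenable G) : UniformlyInnerAmenable H := by
  rw [uia_iff] at h ⊢
  intro n hn
  obtain ⟨k, hk⟩ := h n hn
  exact ⟨k, (realize_uniS n k).1 ((elementarilyEquivalent_iff.1 e _).1 ((realize_uniS n k).2 hk))⟩

/-- The model-theoretic ultrapower is the group of germs. -/
noncomputable def germEquiv {I G : Type*} [Group G] (u : Ultrafilter I) :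
    (u : Filter I).Product (fun _ => G) ≃[grpLang] (u : Filter I).Germ G where
  toFun x := x
  invFun x := x
  left_inv _ := rfl
  right_inv _ := rfl
  map_fun' {n} f v := by
    obtain ⟨w, rfl⟩ : ∃ w : Fin n → I → G,
        v = fun i => (w i : (u : Filter I).Product (fun _ => G)) :=
      ⟨fun i => Quotient.out (v i), funext fun i => (Quotient.out_eq (v i)).symm⟩
    refine (Ultraproduct.funMap_cast (u := u) (M := fun _ => G) f w).trans ?_
    match n, f with
    | 0, _ => rfl
    | 1, _ => rfl
    | 2, _ => rfl
  map_rel' {n} r := Empty.elim r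

theorem germ_equiv {I G : Type*} [Group G] (u : Ultrafilter I) :
    G ≅[grpLang] (u : Filter I).Germ G := by
  rw [elementarilyEquivalent_iff]
  intro φ
  rw [← StrongHomClass.realize_sentence (germEquiv u) φ, Ultraproduct.sentence_realize]
  simp

theorem germ_good {I G : Type*} [Group G] (u : Ultrafilter I) (n m : ℕ) (x : Fin n → I → G) :
    Good n m (fun i => (x i : (u : Filter I).Germ G)) ↔ ∀ᶠ k in u, Good n m (fun i => x i k) := by
  simp only [← realize_goodF]
  refine Iff.trans ?_ (Ultraproduct.realize_formula_cast (u := u) (M := fun _ => G) (goodF n m) x)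
  exact StrongHomClass.realize_formula (germEquiv u) (goodF n m)
    (v := fun i => (x i : (u : Filter I).Product (fun _ => G)))

theorem exists_bad (G : Type*) [Group G] (h : ¬ UniformlyInnerAmenable G) :
    ∃ n, 0 < n ∧ ∃ x : Fin n → ((hyperfilter (ULift ℕ) : Ultrafilter (ULift ℕ)) :
      Filter (ULift ℕ)).Germ G, ∀ m, n ≤ m → ¬ Good n m x := by
  rw [uia_iff] at h
  push Not at h
  obtain ⟨n, hn, h⟩ := h
  choose X hX using h
  refine ⟨n, hn, fun i => ((fun k => X k.down i : ULift ℕ → G) : Germ _ G), ?_⟩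
  intro m hm hg
  rw [germ_good] at hg
  have hf : {k : ULift ℕ | k.down < m}.Finite :=
    (Set.finite_lt_nat m).preimage (Equiv.ulift.injective.injOn)
  have h2 := compl_mem_hyperfilter_of_finite hf
  obtain ⟨k, h3, h4⟩ := (hg.and h2).exists
  exact hX k.down m ⟨hm, by simpa using h4⟩ h3

theorem hyperfilter_ne_pure {I : Type*} [Infinite I] (i : I) : hyperfilter I ≠ pure i := by
  intro h
  have : ({i} : Set I) ∈ hyperfilter I := by rw [h]; simp
  exact notMem_hyperfilter_of_finite (Set.finite_singleton i) this

instance : Countable grpLang.Symbols := by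
  have h1 : ∀ n, Countable (grpLang.Functions n) := by
    intro n
    match n with
    | 0 => exact inferInstanceAs (Countable Unit)
    | 1 => exact inferInstanceAs (Countable Unit)
    | 2 => exact inferInstanceAs (Countable Unit)
    | _ + 3 => exact inferInstanceAs (Countable Empty)
  have h2 : ∀ n, Countable (grpLang.Relations n) := fun n => inferInstanceAs (Countable Empty)
  infer_instance

theorem hom_funMap {G H : Type*} [Group G] [Group H] (j : G →* H) {n : ℕ}
    (f : grpLang.Functions n) (v : Fin n → G) :
    j (Structure.funMap f v) = Structure.funMap f (fun i => j (v i)) := by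
  match n, f with
  | 0, _ => exact map_one j
  | 1, _ => exact map_inv j _
  | 2, _ => exact map_mul j _ _

theorem exists_countable (P : Type*) [Group P] (s : Set P) (hs : s.Countable) :
    ∃ S : grpLang.ElementarySubstructure P, s ⊆ S ∧ Countable S := by
  rcases finite_or_infinite P with hP | hP
  · exact ⟨⊤, fun _ _ => trivial, inferInstance⟩
  · obtain ⟨S, h1, h2⟩ := exists_elementarySubstructure_card_eq grpLang s Cardinal.aleph0.{0}
      le_rfl (by simpa using hs) (by
        have := Cardinal.mk_le_aleph0 (α := grpLang.Symbols)
        simpa only [Language.card, Cardinal.lift_aleph0, Cardinal.lift_le_aleph0] using this) (by simp)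
    refine ⟨S, h1, ?_⟩
    rw [← Cardinal.mk_le_aleph0_iff]
    simpa using h2.le

universe w

/-- Elementary substructures of groups are subgroups. -/
def toSubgroup {P : Type*} [Group P] (S : grpLang.ElementarySubstructure P) : Subgroup P where
  carrier := S
  mul_mem' {a b} ha hb := S.toSubstructure.fun_mem (mulF) ![a, b] (by
    intro i
    match i with
    | 0 => exact ha
    | 1 => exact hb)
  one_mem' := S.toSubstructure.fun_mem (n := 0) (() : grpLang.Functions 0) ![] (fun i => i.elim0)
  inv_mem' {a} ha := S.toSubstructure.fun_mem (n := 1) (() : grpLang.Functions 1) ![a] (by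
    intro i
    match i with
    | 0 => exact ha)

theorem exists_small (P : Type*) [Group P] (n : ℕ) (x : Fin n → P) :
    ∃ (H : Type w) (_ : Group H) (y : Fin n → H), (P ≅[grpLang] H) ∧
      ∀ m, Good n m y ↔ Good n m x := by
  obtain ⟨S, hS, hc⟩ := exists_countable P (Set.range x) (Set.countable_range x)
  have : Countable (toSubgroup S) := hc
  let q : Shrink.{w} (toSubgroup S) ≃* toSubgroup S :=
    (equivShrink.{w} (toSubgroup S)).symm.mulEquiv
  let j : Shrink.{w} (toSubgroup S) →* P :=
    (toSubgroup S).subtype.comp q.toMonoidHom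
  have hj : Function.Injective j :=
    (Subtype.val_injective).comp q.injective
  let e0 : S ≃ Shrink.{w} (toSubgroup S) := equivShrink.{w} (toSubgroup S)
  have he0 : ∀ s, j (e0 s) = s := by
    intro s
    exact congrArg Subtype.val ((equivShrink.{w} (toSubgroup S)).symm_apply_apply ⟨s.1, s.2⟩)
  let e : S ≃[grpLang] Shrink.{w} (toSubgroup S) :=
    { e0 with
      map_fun' := by
        intro n f v
        apply hj
        rw [hom_funMap]
        change j (e0 _) = Structure.funMap f fun i => j (e0 (v i))
        simp only [he0]
        rfl
      map_rel' := fun {n} r => Empty.elim r }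
  refine ⟨Shrink.{w} (toSubgroup S), inferInstance,
    fun i => e ⟨x i, hS ⟨i, rfl⟩⟩, ?_, ?_⟩
  · exact S.elementarilyEquivalent.symm.trans (StrongHomClass.elementarilyEquivalent e)
  · intro m
    rw [← realize_goodF, ← realize_goodF]
    have h1 := StrongHomClass.realize_formula e (goodF n m) (v := fun i => ⟨x i, hS ⟨i, rfl⟩⟩)
    have h2 := S.subtype.map_formula (goodF n m) (fun i => ⟨x i, hS ⟨i, rfl⟩⟩)
    exact h1.trans h2.symm

end UIA

/-- A group `G` is uniformly inner amenable iff every group elementarily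
equivalent to `G` is inner amenable, iff every ultrapower of `G` with respect
to a nonprincipal ultrafilter is inner amenable. -/
theorem uniformlyInnerAmenable_iff (G : Type*) [Group G] :
    (UniformlyInnerAmenable G ↔
      ∀ (H : Type*) [Group H], G ≅[grpLang] H → FolnerInnerAmenable H) ∧
    (UniformlyInnerAmenable G ↔
      ∀ (I : Type*) (u : Ultrafilter I), (∀ i : I, u ≠ pure i) →
        FolnerInnerAmenable ((u : Filter I).Germ G)) := by
  refine ⟨⟨fun h H _ e => UIA.uia_ia (UIA.uia_of_equiv e h), fun h => ?_⟩,
    ⟨fun h I u _ => UIA.uia_ia (UIA.uia_of_equiv (UIA.germ_equiv u) h), fun h => ?_⟩⟩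
  · by_contra hG
    obtain ⟨n, hn, x, hx⟩ := UIA.exists_bad.{_, 0} G hG
    obtain ⟨H, _, y, hH, hy⟩ := UIA.exists_small _ n x
    obtain ⟨m, hm, hg⟩ := UIA.ia_iff.1 (h H ((UIA.germ_equiv _).trans hH)) n hn y
    exact hx m hm ((hy m).1 hg)
  · by_contra hG
    obtain ⟨n, hn, x, hx⟩ := UIA.exists_bad G hG
    obtain ⟨m, hm, hg⟩ := UIA.ia_iff.1 (h (ULift ℕ) (Filter.hyperfilter (ULift ℕ))
      UIA.hyperfilter_ne_pure) n hn x
    exact hx m hm hg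
end
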